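/- Let (m, a) be a monodromy datum. Then 2 · #{n : 1 ≤ n ≤ m − 1 and f(n) = 1} = m + 2 − gcd(a(1), m) − gcd(a(2), m) − gcd(a(3), m), where f(n) = −1 + Σ_{i=1}^{3} ⟨−n·a(i)/m⟩. In particular, m − gcd(a(1), m) − gcd(a(2), m) − gcd(a(3), m) is even, and the genus g(m, a) := 1 + (m − gcd(a(1), m) − gcd(a(2), m) − gcd(a(3), m))/2 equals #{n : 1 ≤ n ≤ m − 1 and f(n) = 1}. -/

import Mathlib

/-- The signature value `f(n) = -1 + ⟨-n·a1/m⟩ + ⟨-n·a2/m⟩ + ⟨-n·a3/m⟩`. -/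
def sig (m a1 a2 a3 : ℕ) (n : ℤ) : ℚ :=
  -1 + Int.fract (-(n : ℚ) * a1 / m) + Int.fract (-(n : ℚ) * a2 / m)
    + Int.fract (-(n : ℚ) * a3 / m)

/-!
For integral `x` both `⟨x⟩` and `⟨-x⟩` vanish, and otherwise `⟨x⟩ + ⟨-x⟩ = 1`. As `m ∣ n * a` for
exactly `gcd(a, m) - 1` of the integers `0 < n < m`, pairing `n` with `m - n` shows that
`2 · Σ ⟨n * a / m⟩ = m - gcd(a, m)`, which gives the sum of the signature values. On the other hand,
each `f(n)` is an integer lying strictly between `-1` and `2`, so the same sum counts the `n` with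
`f(n) = 1`.
-/

open Finset

lemma natCast_dvd_mul_iff_div_gcd_dvd {m : ℕ} (hm : 0 < m) (a : ℤ) (n : ℕ) :
    (m : ℤ) ∣ n * a ↔ m / Int.gcd a m ∣ n := by
  rw [Int.natCast_dvd, Int.natAbs_mul, Int.natAbs_natCast, Int.gcd_comm, Int.gcd_def,
    Int.natAbs_natCast,
    Nat.div_dvd_iff_dvd_mul (Nat.gcd_dvd_left ..) (Nat.gcd_pos_of_pos_left _ hm), mul_comm _ n,
    Nat.dvd_mul_gcd_iff_dvd_mul]

lemma card_Ioo_filter_dvd_mul_add_one {m : ℕ} (hm : 0 < m) (a : ℤ) :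
    #{n ∈ Ioo 0 m | (m : ℤ) ∣ (n : ℕ) * a} + 1 = Int.gcd a m := by
  have hdvd : Int.gcd a m ∣ m := by exact_mod_cast Int.gcd_dvd_right a m
  calc #{n ∈ Ioo 0 m | (m : ℤ) ∣ (n : ℕ) * a} + 1
      = #{n ∈ Ioc 0 m | (m : ℤ) ∣ (n : ℕ) * a} := by
        rw [← Ioo_insert_right hm, filter_insert, if_pos (dvd_mul_right ..),
          card_insert_of_notMem (by simp)]
    _ = m / (m / Int.gcd a m) := by
        simp only [natCast_dvd_mul_iff_div_gcd_dvd hm, Nat.Ioc_filter_dvd_card_eq_div]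
    _ = Int.gcd a m := Nat.div_div_self hdvd hm.ne'

lemma sum_Ioo_zero_reflect {M : Type*} [AddCommMonoid M] (f : ℕ → M) (m : ℕ) :
    ∑ n ∈ Ioo 0 m, f (m - n) = ∑ n ∈ Ioo 0 m, f n := by
  simpa only [Nat.add_sub_cancel_left, Nat.add_sub_cancel, ← Ico_add_one_left_eq_Ioo, zero_add]
    using sum_Ico_reflect f 1 (Nat.le_succ m)

section Fract

variable {K : Type*} [Field K] [LinearOrder K] [IsStrictOrderedRing K] [FloorRing K]

lemma fract_intCast_div_natCast_eq_zero_iff {m : ℕ} (hm : m ≠ 0) (z : ℤ) :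
    Int.fract ((z : K) / m) = 0 ↔ (m : ℤ) ∣ z := by
  rw [Int.fract_div_intCast_eq_div_intCast_mod, div_eq_zero_iff,
    or_iff_left (Nat.cast_ne_zero.mpr hm), Int.cast_eq_zero, Int.dvd_iff_emod_eq_zero]

lemma fract_add_fract_neg_of_intCast_div {m : ℕ} (hm : m ≠ 0) (z : ℤ) :
    Int.fract ((z : K) / m) + Int.fract (-((z : K) / m)) = 1 - if (m : ℤ) ∣ z then 1 else 0 := by
  split_ifs with h <;> rw [← fract_intCast_div_natCast_eq_zero_iff (K := K) hm] at h
  · rw [h, Int.fract_neg_eq_zero.mpr h, add_zero, sub_self]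
  · rw [Int.fract_neg h, add_sub_cancel, sub_zero]

lemma sum_fract_neg_mul_div (m : ℕ) (a : ℤ) :
    ∑ n ∈ Ioo 0 m, Int.fract (-(((n * a : ℤ) : K) / m))
      = ∑ n ∈ Ioo 0 m, Int.fract (((n * a : ℤ) : K) / m) := by
  rw [← sum_Ioo_zero_reflect]
  refine sum_congr rfl fun n hn ↦ ?_
  have hm : (m : K) ≠ 0 := Nat.cast_ne_zero.mpr (pos_of_gt (mem_Ioo.mp hn).2).ne'
  have hshift : -((((m - n : ℕ) * a : ℤ) : K) / m) = ((n * a : ℤ) : K) / m - a := by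
    push_cast [(mem_Ioo.mp hn).2.le]
    field_simp
    ring
  rw [hshift, Int.fract_sub_intCast]

lemma two_mul_sum_fract_mul_div {m : ℕ} (hm : 0 < m) (a : ℤ) :
    2 * ∑ n ∈ Ioo 0 m, Int.fract (((n * a : ℤ) : K) / m) = m - Int.gcd a m := by
  calc 2 * ∑ n ∈ Ioo 0 m, Int.fract (((n * a : ℤ) : K) / m)
      = ∑ n ∈ Ioo 0 m,
          (Int.fract (((n * a : ℤ) : K) / m) + Int.fract (-(((n * a : ℤ) : K) / m))) := by
        rw [sum_add_distrib, sum_fract_neg_mul_div, two_mul]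
    _ = (m - 1 : ℕ) - #{n ∈ Ioo 0 m | (m : ℤ) ∣ (n : ℕ) * a} := by
        simp only [fract_add_fract_neg_of_intCast_div hm.ne', sum_sub_distrib, sum_boole,
          sum_const, Nat.card_Ioo, tsub_zero, nsmul_one]
    _ = m - Int.gcd a m := by
        rw [← card_Ioo_filter_dvd_mul_add_one hm, Nat.cast_pred hm]
        push_cast
        ring

lemma fract_add_fract_add_fract_eq_one_or_two {x y z : K} (hint : Int.fract (x + y + z) = 0)
    (hne : ¬ (Int.fract x = 0 ∧ Int.fract y = 0 ∧ Int.fract z = 0)) :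
    Int.fract x + Int.fract y + Int.fract z = 1 ∨
      Int.fract x + Int.fract y + Int.fract z = 2 := by
  obtain ⟨k, hk⟩ : ∃ k : ℤ, Int.fract x + Int.fract y + Int.fract z = k := by
    obtain ⟨s, hs⟩ := Int.fract_eq_zero_iff.mp hint
    refine ⟨s - ⌊x⌋ - ⌊y⌋ - ⌊z⌋, ?_⟩
    push_cast [hs, Int.fract]
    ring
  have hx := Int.fract_nonneg x
  have hy := Int.fract_nonneg y
  have hz := Int.fract_nonneg z
  have hpos : (0 : K) < k := by
    contrapose! hne
    refine ⟨?_, ?_, ?_⟩ <;> linarith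
  have hlt : (k : K) < 3 := by
    linarith [Int.fract_lt_one x, Int.fract_lt_one y, Int.fract_lt_one z]
  have hk12 : k = 1 ∨ k = 2 := by
    have : 0 < k := by exact_mod_cast hpos
    have : k < 3 := by exact_mod_cast hlt
    omega
  rw [hk]
  exact_mod_cast hk12

end Fract

lemma sig_eq_sum_fract_sub_one (m a1 a2 a3 : ℕ) (n : ℤ) :
    sig m a1 a2 a3 n = Int.fract (((n * -a1 : ℤ) : ℚ) / m) + Int.fract (((n * -a2 : ℤ) : ℚ) / m)
      + Int.fract (((n * -a3 : ℤ) : ℚ) / m) - 1 := by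
  simp only [sig]
  push_cast
  simp only [mul_neg, neg_mul]
  ring

lemma two_mul_sum_sig {m : ℕ} (hm : 0 < m) (a1 a2 a3 : ℕ) :
    2 * ∑ n ∈ Ioo 0 m, sig m a1 a2 a3 (n : ℕ)
      = m + 2 - (Nat.gcd a1 m + Nat.gcd a2 m + Nat.gcd a3 m) := by
  simp only [sig_eq_sum_fract_sub_one, sum_sub_distrib, sum_add_distrib, mul_sub, mul_add,
    two_mul_sum_fract_mul_div hm, Int.neg_gcd, Int.gcd_natCast_natCast, sum_const, Nat.card_Ioo,
    tsub_zero, nsmul_one, Nat.cast_pred hm]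
  ring

section MonodromyDatum

variable {m a1 a2 a3 : ℕ}

lemma pos_of_gcd_eq_one_of_dvd_add (hgcd : Nat.gcd m (Nat.gcd a1 (Nat.gcd a2 a3)) = 1)
    (hsum : m ∣ a1 + a2 + a3) : 0 < m := by
  rw [Nat.pos_iff_ne_zero]
  rintro rfl
  obtain ⟨⟨rfl, rfl⟩, rfl⟩ : (a1 = 0 ∧ a2 = 0) ∧ a3 = 0 := by simpa using hsum
  simp at hgcd

lemma dvd_of_dvd_mul_of_gcd_eq_one (hgcd : Nat.gcd m (Nat.gcd a1 (Nat.gcd a2 a3)) = 1) {n : ℤ}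
    (h1 : (m : ℤ) ∣ n * a1) (h2 : (m : ℤ) ∣ n * a2) (h3 : (m : ℤ) ∣ n * a3) : (m : ℤ) ∣ n := by
  simp only [Int.natCast_dvd, Int.natAbs_mul, Int.natAbs_natCast] at h1 h2 h3 ⊢
  refine Nat.Coprime.dvd_of_dvd_mul_right hgcd ?_
  rw [← Nat.gcd_mul_left, ← Nat.gcd_mul_left]
  exact Nat.dvd_gcd h1 (Nat.dvd_gcd h2 h3)

lemma sig_eq_zero_or_one (hgcd : Nat.gcd m (Nat.gcd a1 (Nat.gcd a2 a3)) = 1)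
    (hsum : m ∣ a1 + a2 + a3) {n : ℤ} (hn : ¬ (m : ℤ) ∣ n) :
    sig m a1 a2 a3 n = 0 ∨ sig m a1 a2 a3 n = 1 := by
  have hm : m ≠ 0 := (pos_of_gcd_eq_one_of_dvd_add hgcd hsum).ne'
  have hint : Int.fract (((n * -a1 : ℤ) : ℚ) / m + ((n * -a2 : ℤ) : ℚ) / m
      + ((n * -a3 : ℤ) : ℚ) / m) = 0 := by
    rw [← add_div, ← add_div, ← Int.cast_add, ← Int.cast_add, ← mul_add, ← mul_add,
      fract_intCast_div_natCast_eq_zero_iff hm, ← neg_add, ← neg_add, mul_neg, dvd_neg]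
    exact (Int.natCast_dvd_natCast.mpr hsum).mul_left n
  have hne : ¬ (Int.fract (((n * -a1 : ℤ) : ℚ) / m) = 0 ∧ Int.fract (((n * -a2 : ℤ) : ℚ) / m) = 0
      ∧ Int.fract (((n * -a3 : ℤ) : ℚ) / m) = 0) := by
    simp only [fract_intCast_div_natCast_eq_zero_iff hm, mul_neg, dvd_neg]
    exact fun ⟨h1, h2, h3⟩ ↦ hn (dvd_of_dvd_mul_of_gcd_eq_one hgcd h1 h2 h3)
  rw [sig_eq_sum_fract_sub_one, sub_eq_zero, sub_eq_iff_eq_add, one_add_one_eq_two]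
  exact fract_add_fract_add_fract_eq_one_or_two hint hne

lemma sum_sig_eq_card_sig_eq_one
    (hgcd : Nat.gcd m (Nat.gcd a1 (Nat.gcd a2 a3)) = 1) (hsum : m ∣ a1 + a2 + a3) :
    ∑ n ∈ Ioo 0 m, sig m a1 a2 a3 (n : ℕ) = #{n ∈ Ioo 0 m | sig m a1 a2 a3 (n : ℕ) = 1} := by
  rw [← sum_boole]
  refine sum_congr rfl fun n hn ↦ ?_
  obtain ⟨hn0, hnm⟩ := mem_Ioo.mp hn
  have hndvd : ¬ (m : ℤ) ∣ n := by
    exact_mod_cast Nat.not_dvd_of_pos_of_lt hn0 hnm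
  rcases sig_eq_zero_or_one hgcd hsum hndvd with h | h <;> simp [h]

end MonodromyDatum

theorem genus_eq_card_signature_one_general (m a1 a2 a3 : ℕ)
    (hgcd : Nat.gcd m (Nat.gcd a1 (Nat.gcd a2 a3)) = 1) (hsum : (a1 + a2 + a3) % m = 0) :
    2 * #{n ∈ Ioo 0 m | sig m a1 a2 a3 (n : ℕ) = 1}
        + (Nat.gcd a1 m + Nat.gcd a2 m + Nat.gcd a3 m) = m + 2
      ∧ Even ((m : ℤ) - (Nat.gcd a1 m + Nat.gcd a2 m + Nat.gcd a3 m))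
      ∧ 1 + ((m : ℤ) - (Nat.gcd a1 m + Nat.gcd a2 m + Nat.gcd a3 m)) / 2
          = #{n ∈ Ioo 0 m | sig m a1 a2 a3 (n : ℕ) = 1} := by
  have hdvd : m ∣ a1 + a2 + a3 := Nat.dvd_of_mod_eq_zero hsum
  have hcard : 2 * #{n ∈ Ioo 0 m | sig m a1 a2 a3 (n : ℕ) = 1}
      + (Nat.gcd a1 m + Nat.gcd a2 m + Nat.gcd a3 m) = m + 2 := by
    have hsig := two_mul_sum_sig (pos_of_gcd_eq_one_of_dvd_add hgcd hdvd) a1 a2 a3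
    rw [sum_sig_eq_card_sig_eq_one hgcd hdvd, eq_sub_iff_add_eq] at hsig
    exact_mod_cast hsig
  refine ⟨hcard, ?_, ?_⟩
  · rw [Int.even_iff]
    omega
  · omega

/-- For a monodromy datum `(m, a)`,
`2 · #{1 ≤ n ≤ m-1 : f(n) = 1} = m + 2 - gcd(a1,m) - gcd(a2,m) - gcd(a3,m)`
(stated additively); in particular `m - Σ gcd(a(i), m)` is even and the genus
`g = 1 + (m - Σ gcd(a(i), m))/2` equals `#{1 ≤ n ≤ m-1 : f(n) = 1}`. -/
theorem genus_eq_card_signature_one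
    (m a1 a2 a3 : ℕ) (hm : 2 ≤ m)
    (ha1 : 0 < a1) (ha2 : 0 < a2) (ha3 : 0 < a3)
    (hnd1 : ¬ m ∣ a1) (hnd2 : ¬ m ∣ a2) (hnd3 : ¬ m ∣ a3)
    (hgcd : Nat.gcd m (Nat.gcd a1 (Nat.gcd a2 a3)) = 1)
    (hsum : (a1 + a2 + a3) % m = 0) :
    2 * ((Finset.Ioo 0 m).filter (fun n : ℕ => sig m a1 a2 a3 (n : ℤ) = 1)).card
        + (Nat.gcd a1 m + Nat.gcd a2 m + Nat.gcd a3 m) = m + 2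
      ∧ Even ((m : ℤ) - (Nat.gcd a1 m + Nat.gcd a2 m + Nat.gcd a3 m))
      ∧ 1 + ((m : ℤ) - (Nat.gcd a1 m + Nat.gcd a2 m + Nat.gcd a3 m)) / 2
          = ((Finset.Ioo 0 m).filter (fun n : ℕ => sig m a1 a2 a3 (n : ℤ) = 1)).card :=
  genus_eq_card_signature_one_general m a1 a2 a3 hgcd hsum
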